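/- arXiv:2002.02478 — 3 statements merged into one kernel-verified Lean document; each statement's English description precedes it below -/
import Mathlib

section
/- Let c₁ > 0, 0 < κ ≤ 1, C ≥ 0, c₀ ∈ ℝ, c* > 0, β > 0, t ∈ ℝ, 0 < ε ≤ 1, λ ∈ ℝ, and set c₄ := 4κ⁻¹c₁²C and č := (1/2)·min{κc*, 2β}. Let Q and q₀ be real numbers. Assume ‖y‖ ≤ c₁‖x‖, ‖z‖² ≤ (κ²/(16c₁²))‖x‖² + C‖u‖², Q ≥ −(1−κ)‖x‖² − c₀‖u‖², λ·q₀ ≥ (c₀ + c₄ + β)‖u‖², and ‖x‖² ≥ c*·t²‖u‖². Then ‖x‖² + 2ε·Re⟨y, z⟩ + ε²Q + λε²q₀ ≥ č(t² + ε²)‖u‖². -/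
open scoped InnerProductSpace

/-!
Young's inequality with weight `κ / 4`, chosen against the constant `κ² / (16 c₁²)` in the bound on
`z`, absorbs the cross term `2 ε Re⟪y, z⟫` at the cost of `(κ / 4) (1 + ε²) ‖x‖² + ε² c₄ ‖u‖²`.
The term `c₄` is compensated by `λ q₀`, and since `ε² ≤ 1` the bounds on `Q` and `q₀` leave
`(κ / 2) ‖x‖² + ε² β ‖u‖²`. Finally `‖x‖² ≥ c* t² ‖u‖²`.
-/

theorem min_mul_add_le {R : Type*} [Semiring R] [LinearOrder R] [IsOrderedRing R] {p q : R}
    (a b : R) (hp : 0 ≤ p) (hq : 0 ≤ q) : min a b * (p + q) ≤ a * p + b * q := by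
  rw [mul_add]
  exact add_le_add (mul_le_mul_of_nonneg_right (min_le_left a b) hp)
    (mul_le_mul_of_nonneg_right (min_le_right a b) hq)

section CrossTerm

variable {𝕜 E : Type*} [RCLike 𝕜] [SeminormedAddCommGroup E] [InnerProductSpace 𝕜 E] {y z : E}

theorem abs_two_mul_mul_re_inner_le {δ c r : ℝ} (ε : ℝ) (hδ : 0 < δ) (hy : ‖y‖ ≤ c * r) :
    |2 * ε * RCLike.re ⟪y, z⟫_𝕜| ≤ δ * r ^ 2 + δ⁻¹ * (c * ε * ‖z‖) ^ 2 :=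
  calc |2 * ε * RCLike.re ⟪y, z⟫_𝕜|
      = 2 * |ε| * |RCLike.re ⟪y, z⟫_𝕜| := by rw [abs_mul, abs_mul, abs_two]
    _ ≤ 2 * |ε| * (‖y‖ * ‖z‖) := by
        gcongr
        exact (RCLike.abs_re_le_norm _).trans (norm_inner_le_norm y z)
    _ ≤ 2 * |ε| * (c * r * ‖z‖) := by gcongr
    _ = 2 * r * (c * |ε| * ‖z‖) := by ring
    _ ≤ δ * r ^ 2 + δ⁻¹ * (c * |ε| * ‖z‖) ^ 2 := two_mul_le_add_mul_sq hδ
    _ = δ * r ^ 2 + δ⁻¹ * (c * ε * ‖z‖) ^ 2 := by simp only [mul_pow, sq_abs]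

theorem abs_two_mul_mul_re_inner_le_of_sq_le {c₁ κ C r s : ℝ} (ε : ℝ) (hc₁ : c₁ ≠ 0) (hκ : 0 < κ)
    (hy : ‖y‖ ≤ c₁ * r) (hz : ‖z‖ ^ 2 ≤ κ ^ 2 / (16 * c₁ ^ 2) * r ^ 2 + C * s ^ 2) :
    |2 * ε * RCLike.re ⟪y, z⟫_𝕜|
      ≤ κ / 4 * (1 + ε ^ 2) * r ^ 2 + ε ^ 2 * (4 * κ⁻¹ * c₁ ^ 2 * C) * s ^ 2 :=
  calc |2 * ε * RCLike.re ⟪y, z⟫_𝕜|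
      ≤ κ / 4 * r ^ 2 + (κ / 4)⁻¹ * (c₁ * ε * ‖z‖) ^ 2 :=
        abs_two_mul_mul_re_inner_le ε (by positivity) hy
    _ = κ / 4 * r ^ 2 + 4 * κ⁻¹ * c₁ ^ 2 * ε ^ 2 * ‖z‖ ^ 2 := by
        rw [inv_div]
        ring
    _ ≤ κ / 4 * r ^ 2
          + 4 * κ⁻¹ * c₁ ^ 2 * ε ^ 2 * (κ ^ 2 / (16 * c₁ ^ 2) * r ^ 2 + C * s ^ 2) := by gcongr
    _ = κ / 4 * (1 + ε ^ 2) * r ^ 2 + ε ^ 2 * (4 * κ⁻¹ * c₁ ^ 2 * C) * s ^ 2 := by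
        field_simp
        ring

end CrossTerm

/-- Here `p`, `n` and `m` stand for `‖x‖²`, `‖u‖²` and `λ q₀`, and `w` for the cross term
`2 ε Re⟪y, z⟫`. -/
theorem half_mul_add_le_of_abs_le {κ c₀ c₄ β ε p n w Q m : ℝ} (hκ : κ ≤ 4 / 3) (hε : |ε| ≤ 1)
    (hp : 0 ≤ p) (hw : |w| ≤ κ / 4 * (1 + ε ^ 2) * p + ε ^ 2 * c₄ * n)
    (hQ : -(1 - κ) * p - c₀ * n ≤ Q) (hm : (c₀ + c₄ + β) * n ≤ m) :
    κ / 2 * p + ε ^ 2 * β * n ≤ p + w + ε ^ 2 * Q + ε ^ 2 * m := by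
  have hε2 : ε ^ 2 ≤ 1 := (sq_le_one_iff_abs_le_one ε).2 hε
  have hQm : ε ^ 2 * ((c₄ + β) * n - (1 - κ) * p) ≤ ε ^ 2 * (Q + m) := by
    gcongr
    linarith
  have hrest : 0 ≤ (1 - ε ^ 2) * (1 - 3 / 4 * κ) * p :=
    mul_nonneg (mul_nonneg (by linarith) (by linarith)) hp
  linarith [neg_le_of_abs_le hw]

theorem stmt_4_general
    {𝕜 H H₁ H₂ : Type*} [RCLike 𝕜]
    [SeminormedAddCommGroup H] [SeminormedAddCommGroup H₁]
    [SeminormedAddCommGroup H₂] [InnerProductSpace 𝕜 H₂]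
    (u : H) (x : H₁) (y z : H₂)
    (c₁ κ C c₀ cstar β t ε lam Q q₀ c₄ ccheck : ℝ)
    (hc₁ : 0 < c₁) (hκ0 : 0 < κ) (hκ : κ ≤ 4 / 3) (hε : |ε| ≤ 1)
    (hc₄ : c₄ = 4 * κ⁻¹ * c₁ ^ 2 * C)
    (hccheck : ccheck = (1 / 2) * min (κ * cstar) (2 * β))
    (hy : ‖y‖ ≤ c₁ * ‖x‖)
    (hz : ‖z‖ ^ 2 ≤ κ ^ 2 / (16 * c₁ ^ 2) * ‖x‖ ^ 2 + C * ‖u‖ ^ 2)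
    (hQ : -(1 - κ) * ‖x‖ ^ 2 - c₀ * ‖u‖ ^ 2 ≤ Q)
    (hq₀ : (c₀ + c₄ + β) * ‖u‖ ^ 2 ≤ lam * q₀)
    (hx : cstar * t ^ 2 * ‖u‖ ^ 2 ≤ ‖x‖ ^ 2) :
    ccheck * (t ^ 2 + ε ^ 2) * ‖u‖ ^ 2
      ≤ ‖x‖ ^ 2 + 2 * ε * RCLike.re ⟪y, z⟫_𝕜 + ε ^ 2 * Q + lam * ε ^ 2 * q₀ := by
  have hcross := abs_two_mul_mul_re_inner_le_of_sq_le (𝕜 := 𝕜) ε hc₁.ne' hκ0 hy hz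
  rw [← hc₄] at hcross
  calc ccheck * (t ^ 2 + ε ^ 2) * ‖u‖ ^ 2
      = 1 / 2 * (min (κ * cstar) (2 * β) * (t ^ 2 + ε ^ 2)) * ‖u‖ ^ 2 := by rw [hccheck]; ring
    _ ≤ 1 / 2 * (κ * cstar * t ^ 2 + 2 * β * ε ^ 2) * ‖u‖ ^ 2 := by
        gcongr
        exact min_mul_add_le _ _ (sq_nonneg t) (sq_nonneg ε)
    _ = κ / 2 * (cstar * t ^ 2 * ‖u‖ ^ 2) + ε ^ 2 * β * ‖u‖ ^ 2 := by ring
    _ ≤ κ / 2 * ‖x‖ ^ 2 + ε ^ 2 * β * ‖u‖ ^ 2 := by gcongr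
    _ ≤ ‖x‖ ^ 2 + 2 * ε * RCLike.re ⟪y, z⟫_𝕜 + ε ^ 2 * Q + ε ^ 2 * (lam * q₀) :=
        half_mul_add_le_of_abs_le hκ hε (sq_nonneg _) hcross hQ hq₀
    _ = ‖x‖ ^ 2 + 2 * ε * RCLike.re ⟪y, z⟫_𝕜 + ε ^ 2 * Q + lam * ε ^ 2 * q₀ := by ring

/-- Let `c₁ > 0`, `0 < κ ≤ 1`, `C ≥ 0`, `c₀ ∈ ℝ`, `c* > 0`, `β > 0`, `t ∈ ℝ`,
`0 < ε ≤ 1`, `λ ∈ ℝ`, and set `c₄ := 4κ⁻¹c₁²C` and `ccheck := (1/2)·min{κc*, 2β}`. Let `Q` and `q₀`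
be real numbers. Assume `‖y‖ ≤ c₁‖x‖`, `‖z‖² ≤ (κ²/(16c₁²))‖x‖² + C‖u‖²`,
`Q ≥ −(1−κ)‖x‖² − c₀‖u‖²`, `λ·q₀ ≥ (c₀ + c₄ + β)‖u‖²`, and `‖x‖² ≥ c*·t²‖u‖²`. Then
`‖x‖² + 2ε·Re⟨y, z⟩ + ε²Q + λε²q₀ ≥ ccheck(t² + ε²)‖u‖²`. -/
theorem stmt_4
    {H H₁ H₂ : Type*}
    [NormedAddCommGroup H] [InnerProductSpace ℂ H]
    [NormedAddCommGroup H₁] [InnerProductSpace ℂ H₁]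
    [NormedAddCommGroup H₂] [InnerProductSpace ℂ H₂]
    (u : H) (x : H₁) (y z : H₂)
    (c₁ κ C c₀ cstar β t ε lam Q q₀ c₄ ccheck : ℝ)
    (hc₁ : 0 < c₁) (hκ0 : 0 < κ) (hκ1 : κ ≤ 1) (hC : 0 ≤ C)
    (hcstar : 0 < cstar) (hβ : 0 < β)
    (hε0 : 0 < ε) (hε1 : ε ≤ 1)
    (hc₄ : c₄ = 4 * κ⁻¹ * c₁ ^ 2 * C)
    (hccheck : ccheck = (1 / 2) * min (κ * cstar) (2 * β))
    (hy : ‖y‖ ≤ c₁ * ‖x‖)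
    (hz : ‖z‖ ^ 2 ≤ κ ^ 2 / (16 * c₁ ^ 2) * ‖x‖ ^ 2 + C * ‖u‖ ^ 2)
    (hQ : -(1 - κ) * ‖x‖ ^ 2 - c₀ * ‖u‖ ^ 2 ≤ Q)
    (hq₀ : (c₀ + c₄ + β) * ‖u‖ ^ 2 ≤ lam * q₀)
    (hx : cstar * t ^ 2 * ‖u‖ ^ 2 ≤ ‖x‖ ^ 2) :
    ccheck * (t ^ 2 + ε ^ 2) * ‖u‖ ^ 2
      ≤ ‖x‖ ^ 2 + 2 * ε * (⟪y, z⟫_ℂ).re + ε ^ 2 * Q + lam * ε ^ 2 * q₀ :=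
  stmt_4_general (𝕜 := ℂ) u x y z c₁ κ C c₀ cstar β t ε lam Q q₀ c₄ ccheck hc₁ hκ0
    (hκ1.trans (by norm_num)) ((abs_of_pos hε0).trans_le hε1) hc₄ hccheck hy hz hQ hq₀ hx
end

section
/- Let X₀ be a closed densely defined linear operator from a complex Hilbert space H to a complex Hilbert space K, let 𝔑 := Ker X₀, and let D := {u ∈ Dom X₀ : u ⟂ 𝔑}. Assume there exists d⁰ > 0 such that ‖X₀φ‖² ≥ d⁰‖φ‖² for all φ ∈ D. Let X₁ : H → K be a bounded linear operator and ω ∈ 𝔑. Then there exists a unique φ ∈ D such that ⟨X₀φ, X₀ζ⟩ = −⟨X₁ω, X₀ζ⟩ for all ζ ∈ D, and this solution satisfies ‖X₀φ‖ ≤ ‖X₁ω‖. -/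
open scoped InnerProductSpace

/-!
Write `D` for `Dom X₀ ∩ 𝔑ᗮ`. The weak equation says exactly that `X₀ φ` is the orthogonal projection
of `-X₁ ω` onto the image `X₀ D`. The graph of `X₀` over the closed subspace `𝔑ᗮ` is complete, and
the lower bound makes its projection to the second factor bounded below, so `X₀ D` is closed and
the projection exists. The lower bound also makes `X₀` injective on `D`, whence uniqueness, and the
norm estimate is the Cauchy–Schwarz inequality for `ζ = φ`.
-/

section ClosedImage

variable {R E F : Type*} [NormedAddCommGroup E] [NormedAddCommGroup F]
  [CompleteSpace E] [CompleteSpace F]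

theorem isClosed_map_snd_of_norm_fst_le [Ring R] [Module R E] [Module R F]
    {G : Submodule R (E × F)} (hG : IsClosed (G : Set (E × F))) {c : ℝ}
    (hbound : ∀ p ∈ G, ‖p.1‖ ≤ c * ‖p.2‖) :
    IsClosed (G.map (LinearMap.snd R E F) : Set F) := by
  have : CompleteSpace G := hG.completeSpace_coe
  let π : G →+ F := (AddMonoidHom.snd E F).comp G.subtype.toAddMonoidHom
  have hπ : AntilipschitzWith (max c.toNNReal 1) π := by
    refine AddMonoidHomClass.antilipschitz_of_bound π fun p ↦ max_le ?_ ?_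
    · calc ‖p.1.1‖ ≤ c * ‖p.1.2‖ := hbound p.1 p.2
        _ ≤ (max c.toNNReal 1 : NNReal) * ‖p.1.2‖ := by
          gcongr
          exact (Real.le_coe_toNNReal c).trans (NNReal.coe_le_coe.mpr (le_max_left _ _))
    · exact le_mul_of_one_le_left (norm_nonneg _) (NNReal.one_le_coe.mpr (le_max_right _ _))
  have hrange : (G.map (LinearMap.snd R E F) : Set F) = Set.range π := by
    ext y
    simp [π]
  rw [hrange]
  exact hπ.isClosed_range (uniformContinuous_snd.comp uniformContinuous_subtype_val)

theorem isClosed_map_toFun_of_norm_le [CommRing R] [Module R E] [Module R F]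
    {T : E →ₗ.[R] F} (hT : T.IsClosed) {S : Submodule R E} (hS : IsClosed (S : Set E)) {c : ℝ}
    (hbound : ∀ u : T.domain, (u : E) ∈ S → ‖(u : E)‖ ≤ c * ‖T u‖) :
    IsClosed ((S.comap T.domain.subtype).map T.toFun : Set F) := by
  have hgraph : IsClosed ((T.graph ⊓ S.comap (LinearMap.fst R E F) : Submodule R (E × F)) :
      Set (E × F)) := hT.inter (hS.preimage continuous_fst)
  have himage : (S.comap T.domain.subtype).map T.toFun =
      (T.graph ⊓ S.comap (LinearMap.fst R E F)).map (LinearMap.snd R E F) := by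
    ext y
    simp [LinearPMap.mem_graph_iff, and_comm]
  rw [himage]
  refine isClosed_map_snd_of_norm_fst_le (c := c) hgraph ?_
  rintro ⟨_, _⟩ ⟨hp, hpS⟩
  obtain ⟨u, rfl, rfl⟩ := (T.mem_graph_iff).mp hp
  exact hbound u hpS

end ClosedImage

section WeakEquation

variable {𝕜 V F : Type*} [RCLike 𝕜] [AddCommGroup V] [Module 𝕜 V]
  [NormedAddCommGroup F] [InnerProductSpace 𝕜 F]

theorem forall_inner_map_eq_iff_map_eq_starProjection (A : V →ₗ[𝕜] F) (M : Submodule 𝕜 V)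
    [(M.map A).HasOrthogonalProjection] (y : F) {φ : V} (hφ : φ ∈ M) :
    (∀ ζ ∈ M, ⟪A φ, A ζ⟫_𝕜 = ⟪y, A ζ⟫_𝕜) ↔ A φ = (M.map A).starProjection y := by
  constructor
  · intro h
    refine (Submodule.eq_starProjection_of_mem_of_inner_eq_zero
      (Submodule.mem_map_of_mem hφ) ?_).symm
    rintro _ ⟨ζ, hζ, rfl⟩
    rw [inner_sub_left, h ζ hζ, sub_self]
  · intro h ζ hζ
    have horth := (M.map A).starProjection_inner_eq_zero y (A ζ) (Submodule.mem_map_of_mem hζ)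
    rw [inner_sub_left, sub_eq_zero] at horth
    rw [h, horth]

theorem existsUnique_mem_forall_inner_map_eq {A : V →ₗ[𝕜] F} {M : Submodule 𝕜 V}
    [(M.map A).HasOrthogonalProjection] (hA : Set.InjOn A M) (y : F) :
    ∃! φ, φ ∈ M ∧ ∀ ζ ∈ M, ⟪A φ, A ζ⟫_𝕜 = ⟪y, A ζ⟫_𝕜 := by
  obtain ⟨φ, hφ, hφy⟩ := (M.map A).starProjection_apply_mem y
  refine ⟨φ, ⟨hφ, (forall_inner_map_eq_iff_map_eq_starProjection A M y hφ).mpr hφy⟩, ?_⟩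
  rintro ψ ⟨hψ, hψy⟩
  have hψproj := (forall_inner_map_eq_iff_map_eq_starProjection A M y hψ).mp hψy
  exact hA hψ hφ (hψproj.trans hφy.symm)

end WeakEquation

theorem norm_le_of_inner_self_eq_inner {𝕜 F : Type*} [RCLike 𝕜] [SeminormedAddCommGroup F]
    [InnerProductSpace 𝕜 F] {x y : F} (h : ⟪x, x⟫_𝕜 = ⟪y, x⟫_𝕜) : ‖x‖ ≤ ‖y‖ := by
  have hmul : ‖x‖ * ‖x‖ ≤ ‖y‖ * ‖x‖ := by
    calc ‖x‖ * ‖x‖ = RCLike.re ⟪x, x⟫_𝕜 := (inner_self_eq_norm_mul_norm x).symm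
      _ = RCLike.re ⟪y, x⟫_𝕜 := by rw [h]
      _ ≤ ‖y‖ * ‖x‖ := re_inner_le_norm y x
  obtain hx | hx := (norm_nonneg x).eq_or_lt
  · exact hx ▸ norm_nonneg y
  · exact le_of_mul_le_mul_right hmul hx

theorem le_inv_sqrt_mul_of_mul_sq_le_sq {d a b : ℝ} (hd : 0 < d) (hb : 0 ≤ b)
    (h : d * a ^ 2 ≤ b ^ 2) : a ≤ (√d)⁻¹ * b := by
  rw [le_inv_mul_iff₀ (Real.sqrt_pos.mpr hd)]
  refine le_of_sq_le_sq ?_ hb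
  rwa [mul_pow, Real.sq_sqrt hd.le]

theorem forall_ker_inner_eq_zero_iff_mem_orthogonal {𝕜 H F : Type*} [RCLike 𝕜]
    [NormedAddCommGroup H] [InnerProductSpace 𝕜 H] [AddCommGroup F] [Module 𝕜 F]
    {U : Submodule 𝕜 H} (A : U →ₗ[𝕜] F) (x : H) :
    (∀ w : U, A w = 0 → ⟪x, (w : H)⟫_𝕜 = 0) ↔ x ∈ (A.ker.map U.subtype)ᗮ := by
  simp [Submodule.mem_orthogonal']

theorem isClosed_linearPMap_mk_iff {R E F : Type*} [CommRing R]
    [AddCommGroup E] [Module R E] [TopologicalSpace E]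
    [AddCommGroup F] [Module R F] [TopologicalSpace F] {U : Submodule R E} (A : U →ₗ[R] F) :
    (⟨U, A⟩ : E →ₗ.[R] F).IsClosed ↔ IsClosed {p : E × F | ∃ u : U, (u : E) = p.1 ∧ A u = p.2} := by
  have hgraph : ((⟨U, A⟩ : E →ₗ.[R] F).graph : Set (E × F)) =
      {p | ∃ u : U, (u : E) = p.1 ∧ A u = p.2} := Set.ext fun _ ↦ LinearPMap.mem_graph_iff _
  rw [LinearPMap.IsClosed, hgraph]

theorem stmt_5_general {𝕜 E K : Type*} [RCLike 𝕜]
    [NormedAddCommGroup E] [NormedSpace 𝕜 E] [CompleteSpace E]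
    [NormedAddCommGroup K] [InnerProductSpace 𝕜 K] [CompleteSpace K]
    {T : E →ₗ.[𝕜] K} (hT : T.IsClosed) {S : Submodule 𝕜 E} (hS : IsClosed (S : Set E)) {c : ℝ}
    (hbound : ∀ u : T.domain, (u : E) ∈ S → ‖(u : E)‖ ≤ c * ‖T u‖) (y : K) :
    (∃! φ : T.domain, (φ : E) ∈ S ∧
      ∀ ζ : T.domain, (ζ : E) ∈ S → ⟪T φ, T ζ⟫_𝕜 = ⟪y, T ζ⟫_𝕜) ∧
    ∀ φ : T.domain, (φ : E) ∈ S →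
      (∀ ζ : T.domain, (ζ : E) ∈ S → ⟪T φ, T ζ⟫_𝕜 = ⟪y, T ζ⟫_𝕜) → ‖T φ‖ ≤ ‖y‖ := by
  let D : Submodule 𝕜 T.domain := S.comap T.domain.subtype
  have : CompleteSpace (D.map T.toFun) :=
    (isClosed_map_toFun_of_norm_le hT hS hbound).completeSpace_coe
  have hinj : Set.InjOn T.toFun D := by
    refine LinearMap.injOn_of_disjoint_ker subset_rfl (Submodule.disjoint_def.mpr fun u huS hu ↦ ?_)
    have hTu : T u = 0 := hu
    have hnorm := hbound u huS
    rw [hTu, norm_zero, mul_zero] at hnorm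
    exact Subtype.ext (norm_le_zero_iff.mp hnorm)
  exact ⟨existsUnique_mem_forall_inner_map_eq hinj y,
    fun φ hφ hweak ↦ norm_le_of_inner_self_eq_inner (hweak φ hφ)⟩

/-- Let `X₀` be a closed densely defined linear operator from a complex Hilbert
space `H` to a complex Hilbert space `K`, let `𝔑 := Ker X₀`, and let
`D := {u ∈ Dom X₀ : u ⟂ 𝔑}`. Assume there exists `d⁰ > 0` such that `‖X₀φ‖² ≥ d⁰‖φ‖²` for all
`φ ∈ D`. Let `X₁ : H → K` be a bounded linear operator and `ω ∈ 𝔑`. Then there exists a unique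
`φ ∈ D` such that `⟨X₀φ, X₀ζ⟩ = −⟨X₁ω, X₀ζ⟩` for all `ζ ∈ D`, and this solution satisfies
`‖X₀φ‖ ≤ ‖X₁ω‖`. -/
theorem stmt_5
    {H K : Type*}
    [NormedAddCommGroup H] [InnerProductSpace ℂ H] [CompleteSpace H]
    [NormedAddCommGroup K] [InnerProductSpace ℂ K] [CompleteSpace K]
    (Dom : Submodule ℂ H) (X₀ : Dom →ₗ[ℂ] K)
    (hdense : Dense (Dom : Set H))
    (hclosed : IsClosed {p : H × K | ∃ u : Dom, (u : H) = p.1 ∧ X₀ u = p.2})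
    (d₀ : ℝ) (hd₀ : 0 < d₀)
    (hlow : ∀ φ : Dom, (∀ w : Dom, X₀ w = 0 → ⟪(φ : H), (w : H)⟫_ℂ = 0) →
      d₀ * ‖(φ : H)‖ ^ 2 ≤ ‖X₀ φ‖ ^ 2)
    (X₁ : H →L[ℂ] K) (ω : Dom) (hω : X₀ ω = 0) :
    (∃! φ : Dom,
      (∀ w : Dom, X₀ w = 0 → ⟪(φ : H), (w : H)⟫_ℂ = 0) ∧
      (∀ ζ : Dom, (∀ w : Dom, X₀ w = 0 → ⟪(ζ : H), (w : H)⟫_ℂ = 0) →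
        ⟪X₀ φ, X₀ ζ⟫_ℂ = -⟪X₁ (ω : H), X₀ ζ⟫_ℂ)) ∧
    (∀ φ : Dom,
      (∀ w : Dom, X₀ w = 0 → ⟪(φ : H), (w : H)⟫_ℂ = 0) →
      (∀ ζ : Dom, (∀ w : Dom, X₀ w = 0 → ⟪(ζ : H), (w : H)⟫_ℂ = 0) →
        ⟪X₀ φ, X₀ ζ⟫_ℂ = -⟪X₁ (ω : H), X₀ ζ⟫_ℂ) →
      ‖X₀ φ‖ ≤ ‖X₁ (ω : H)‖) := by
  simp only [forall_ker_inner_eq_zero_iff_mem_orthogonal, ← inner_neg_left,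
    ← norm_neg (X₁ (ω : H))] at hlow ⊢
  exact stmt_5_general ((isClosed_linearPMap_mk_iff X₀).mpr hclosed)
    (Submodule.isClosed_orthogonal _)
    (fun φ hφ ↦ le_inv_sqrt_mul_of_mul_sq_le_sq hd₀ (norm_nonneg _) (hlow φ hφ)) (-X₁ ω)
end

section
/- Let X₀ be a closed densely defined linear operator from a complex Hilbert space H to a complex Hilbert space K, let 𝔑 := Ker X₀, and let D := {u ∈ Dom X₀ : u ⟂ 𝔑}. Assume there exists d⁰ > 0 such that ‖X₀φ‖² ≥ d⁰‖φ‖² for all φ ∈ D. Let G be a complex Hilbert space, let Y₀ : Dom X₀ → G be a linear map satisfying ‖Y₀ζ‖ ≤ c₁‖X₀ζ‖ for all ζ ∈ Dom X₀ (with some c₁ > 0), and let w ∈ G. Then there exists a unique ψ ∈ D such that ⟨X₀ψ, X₀ζ⟩ = −⟨w, Y₀ζ⟩ for all ζ ∈ D, and this solution satisfies ‖X₀ψ‖ ≤ c₁‖w‖. -/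
/-!
Since `𝔑ᗮ` is closed, the lower bound together with closedness of the graph of `X₀` makes the range
`X₀(D)` closed, hence a Hilbert space. The bound on `Y₀` says exactly that `ζ ↦ -⟨w, Y₀ζ⟩` descends
to a functional of norm at most `c₁‖w‖` on `X₀(D)`; the Riesz representation theorem there provides
`X₀ψ`, and injectivity of `X₀` on `D`, again from the lower bound, turns this into a unique `ψ`.
-/

open scoped InnerProductSpace

theorem linearPMap_isClosed_iff {R E F : Type*} [CommRing R] [AddCommGroup E] [AddCommGroup F]
    [Module R E] [Module R F] [TopologicalSpace E] [TopologicalSpace F] {T : E →ₗ.[R] F} :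
    T.IsClosed ↔ IsClosed {p : E × F | ∃ u : T.domain, (u : E) = p.1 ∧ T u = p.2} :=
  iff_of_eq (congrArg IsClosed (Set.ext fun _ => T.mem_graph_iff))

section ClosedRange

variable {E F : Type*} [SeminormedAddCommGroup E] [SeminormedAddCommGroup F]

theorem antilipschitzWith_of_mul_sq_norm_le {𝓕 : Type*} [FunLike 𝓕 E F] [AddMonoidHomClass 𝓕 E F]
    {f : 𝓕} {d : ℝ} (hd : 0 < d) (hf : ∀ x, d * ‖x‖ ^ 2 ≤ ‖f x‖ ^ 2) :
    AntilipschitzWith (√d)⁻¹.toNNReal f := by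
  refine AddMonoidHomClass.antilipschitz_of_bound f fun x => ?_
  rw [Real.coe_toNNReal _ (by positivity), inv_mul_eq_div, le_div_iff₀ (Real.sqrt_pos.2 hd)]
  refine le_of_sq_le_sq ?_ (norm_nonneg _)
  rw [mul_pow, Real.sq_sqrt hd.le, mul_comm]
  exact hf x

theorem cauchySeq_of_antilipschitzWith_comp {α β ι : Type*} [PseudoEMetricSpace α]
    [PseudoEMetricSpace β] [Nonempty ι] [SemilatticeSup ι] {c : NNReal} {f : α → β}
    (hf : AntilipschitzWith c f) {u : ι → α} (hu : CauchySeq (f ∘ u)) : CauchySeq u := by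
  rw [cauchySeq_iff_tendsto, ← Prod.map_comp_map, ← Filter.tendsto_comap_iff] at hu
  exact cauchySeq_iff_tendsto.2 (hu.mono_right hf.comap_uniformity_le)

theorem isClosed_range_domRestrict_of_antilipschitzWith {R : Type*} [CommRing R] [Module R E]
    [Module R F] [CompleteSpace E] {T : E →ₗ.[R] F} (hT : T.IsClosed) {s : Set E} (hs : IsClosed s)
    {c : NNReal} (hanti : AntilipschitzWith c ((Subtype.val ⁻¹' s : Set T.domain).domRestrict T)) :
    IsClosed (Set.range ((Subtype.val ⁻¹' s : Set T.domain).domRestrict T)) := by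
  refine IsSeqClosed.isClosed fun y y₀ hy hlim => ?_
  choose u hu using hy
  obtain rfl : (fun n => T (u n)) = y := funext hu
  have hu_cauchy : CauchySeq u := cauchySeq_of_antilipschitzWith_comp hanti hlim.cauchySeq
  have hx_cauchy : CauchySeq fun n => ((u n : T.domain) : E) :=
    (uniformContinuous_subtype_val.comp uniformContinuous_subtype_val).comp_cauchySeq hu_cauchy
  obtain ⟨x₀, hx₀⟩ := cauchySeq_tendsto_of_complete hx_cauchy
  have hx₀_mem : x₀ ∈ s := hs.mem_of_tendsto hx₀ (.of_forall fun n => (u n).2)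
  have hgraph : (x₀, y₀) ∈ T.graph :=
    IsClosed.mem_of_tendsto hT (hx₀.prodMk_nhds hlim) (.of_forall fun n => T.mem_graph (u n))
  obtain ⟨v, rfl, hv⟩ := T.mem_graph_iff.1 hgraph
  exact ⟨⟨v, hx₀_mem⟩, hv⟩

end ClosedRange

section Representation

variable {𝕜 V K : Type*} [RCLike 𝕜] [AddCommGroup V] [Module 𝕜 V]

theorem norm_le_of_norm_inner_self_le [SeminormedAddCommGroup K] [InnerProductSpace 𝕜 K]
    {x : K} {C : ℝ} (hC : 0 ≤ C) (hx : ‖⟪x, x⟫_𝕜‖ ≤ C * ‖x‖) : ‖x‖ ≤ C := by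
  rw [inner_self_eq_norm_sq_to_K, norm_pow, RCLike.norm_ofReal, abs_norm, sq] at hx
  rcases (norm_nonneg x).eq_or_lt with h | h
  · exact h ▸ hC
  · exact le_of_mul_le_mul_right hx h

variable [NormedAddCommGroup K] [InnerProductSpace 𝕜 K] {L : V →ₗ[𝕜] K} {ℓ : V →ₗ[𝕜] 𝕜}

theorem exists_forall_inner_map_eq [CompleteSpace L.range] {C : ℝ}
    (hℓ : ∀ v, ‖ℓ v‖ ≤ C * ‖L v‖) : ∃ v, ∀ z, ⟪L v, L z⟫_𝕜 = ℓ z := by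
  let g : L.range →L[𝕜] 𝕜 := ℓ.extendOfNorm L.rangeRestrict
  have hg (z : V) : g (L.rangeRestrict z) = ℓ z :=
    LinearMap.extendOfNorm_eq L.surjective_rangeRestrict.denseRange ⟨C, hℓ⟩ z
  obtain ⟨v, hv⟩ := L.surjective_rangeRestrict ((InnerProductSpace.toDual 𝕜 L.range).symm g)
  refine ⟨v, fun z => ?_⟩
  calc ⟪L v, L z⟫_𝕜 = ⟪L.rangeRestrict v, L.rangeRestrict z⟫_𝕜 := rfl
    _ = g (L.rangeRestrict z) := by rw [hv, InnerProductSpace.toDual_symm_apply]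
    _ = ℓ z := hg z

theorem eq_of_forall_inner_map_eq (hL : Function.Injective L) {v v' : V}
    (h : ∀ z, ⟪L v, L z⟫_𝕜 = ⟪L v', L z⟫_𝕜) : v = v' := by
  have hinner : ⟪L v - L v', L (v - v')⟫_𝕜 = 0 := by rw [inner_sub_left, h, sub_self]
  rw [map_sub, inner_self_eq_zero, sub_eq_zero] at hinner
  exact hL hinner

theorem existsUnique_forall_inner_map_eq [CompleteSpace L.range] (hL : Function.Injective L)
    {C : ℝ} (hℓ : ∀ v, ‖ℓ v‖ ≤ C * ‖L v‖) : ∃! v, ∀ z, ⟪L v, L z⟫_𝕜 = ℓ z := by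
  obtain ⟨v, hv⟩ := exists_forall_inner_map_eq hℓ
  exact ⟨v, hv, fun v' hv' => eq_of_forall_inner_map_eq hL fun z => (hv' z).trans (hv z).symm⟩

end Representation

theorem mem_orthogonal_map_ker_iff {𝕜 H M : Type*} [RCLike 𝕜] [NormedAddCommGroup H]
    [InnerProductSpace 𝕜 H] [AddCommMonoid M] [Module 𝕜 M] {p : Submodule 𝕜 H} {f : p →ₗ[𝕜] M}
    {x : H} : x ∈ (f.ker.map p.subtype)ᗮ ↔ ∀ v : p, f v = 0 → ⟪x, (v : H)⟫_𝕜 = 0 := by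
  simp only [Submodule.mem_orthogonal', Submodule.mem_map, LinearMap.mem_ker,
    Submodule.subtype_apply, forall_exists_index, and_imp, forall_apply_eq_imp_iff₂]

theorem stmt_6_general {𝕜 H K G : Type*} [RCLike 𝕜]
    [NormedAddCommGroup H] [NormedSpace 𝕜 H] [CompleteSpace H]
    [NormedAddCommGroup K] [InnerProductSpace 𝕜 K] [CompleteSpace K]
    [SeminormedAddCommGroup G] [InnerProductSpace 𝕜 G]
    {X₀ : H →ₗ.[𝕜] K} (hX₀ : X₀.IsClosed)
    {S : Submodule 𝕜 H} (hS : IsClosed (S : Set H)) {d₀ : ℝ} (hd₀ : 0 < d₀)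
    (hlow : ∀ φ : X₀.domain, (φ : H) ∈ S → d₀ * ‖(φ : H)‖ ^ 2 ≤ ‖X₀ φ‖ ^ 2)
    (Y₀ : X₀.domain →ₗ[𝕜] G) {c₁ : ℝ} (hc₁ : 0 ≤ c₁)
    (hY₀ : ∀ ζ : X₀.domain, (ζ : H) ∈ S → ‖Y₀ ζ‖ ≤ c₁ * ‖X₀ ζ‖) (w : G) :
    (∃! ψ : X₀.domain, (ψ : H) ∈ S ∧
      ∀ ζ : X₀.domain, (ζ : H) ∈ S → ⟪X₀ ψ, X₀ ζ⟫_𝕜 = -⟪w, Y₀ ζ⟫_𝕜) ∧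
    ∀ ψ : X₀.domain, (ψ : H) ∈ S →
      (∀ ζ : X₀.domain, (ζ : H) ∈ S → ⟪X₀ ψ, X₀ ζ⟫_𝕜 = -⟪w, Y₀ ζ⟫_𝕜) →
      ‖X₀ ψ‖ ≤ c₁ * ‖w‖ := by
  let D : Submodule 𝕜 X₀.domain := S.comap X₀.domain.subtype
  let L : D →ₗ[𝕜] K := X₀.toFun.domRestrict D
  let ℓ : D →ₗ[𝕜] 𝕜 := -(innerₛₗ 𝕜 w ∘ₗ Y₀.domRestrict D)
  have hℓ (ζ : D) : ‖ℓ ζ‖ ≤ c₁ * ‖w‖ * ‖L ζ‖ :=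
    calc ‖ℓ ζ‖ = ‖⟪w, Y₀ ζ⟫_𝕜‖ := norm_neg _
      _ ≤ ‖w‖ * ‖Y₀ ζ‖ := norm_inner_le_norm _ _
      _ ≤ ‖w‖ * (c₁ * ‖L ζ‖) := by gcongr; exact hY₀ ζ ζ.2
      _ = c₁ * ‖w‖ * ‖L ζ‖ := by ring
  have hanti : AntilipschitzWith (√d₀)⁻¹.toNNReal L :=
    antilipschitzWith_of_mul_sq_norm_le hd₀ fun φ => hlow φ φ.2
  have hrange : IsClosed (L.range : Set K) :=
    isClosed_range_domRestrict_of_antilipschitzWith hX₀ hS hanti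
  have : CompleteSpace L.range := hrange.completeSpace_coe
  obtain ⟨ψ, hψ, hψ_unique⟩ := existsUnique_forall_inner_map_eq hanti.injective hℓ
  refine ⟨⟨ψ, ⟨ψ.2, fun ζ hζ => hψ ⟨ζ, hζ⟩⟩, fun φ ⟨hφS, hφ⟩ => ?_⟩, fun φ hφS hφ => ?_⟩
  · exact congrArg Subtype.val (hψ_unique ⟨φ, hφS⟩ fun ζ => hφ ζ ζ.2)
  · refine norm_le_of_norm_inner_self_le (𝕜 := 𝕜) (by positivity) ?_
    rw [hφ φ hφS]
    exact hℓ ⟨φ, hφS⟩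

/-- Let `X₀` be a closed densely defined linear operator from a complex Hilbert
space `H` to a complex Hilbert space `K`, let `𝔑 := Ker X₀`, and let
`D := {u ∈ Dom X₀ : u ⟂ 𝔑}`. Assume there exists `d⁰ > 0` such that `‖X₀φ‖² ≥ d⁰‖φ‖²` for all
`φ ∈ D`. Let `G` be a complex Hilbert space, let `Y₀ : Dom X₀ → G` be a linear map satisfying
`‖Y₀ζ‖ ≤ c₁‖X₀ζ‖` for all `ζ ∈ Dom X₀` (with some `c₁ > 0`), and let `w ∈ G`. Then there
exists a unique `ψ ∈ D` such that `⟨X₀ψ, X₀ζ⟩ = −⟨w, Y₀ζ⟩` for all `ζ ∈ D`, and this solution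
satisfies `‖X₀ψ‖ ≤ c₁‖w‖`. -/
theorem stmt_6
    {H K G : Type*}
    [NormedAddCommGroup H] [InnerProductSpace ℂ H] [CompleteSpace H]
    [NormedAddCommGroup K] [InnerProductSpace ℂ K] [CompleteSpace K]
    [NormedAddCommGroup G] [InnerProductSpace ℂ G] [CompleteSpace G]
    (Dom : Submodule ℂ H) (X₀ : Dom →ₗ[ℂ] K)
    (hdense : Dense (Dom : Set H))
    (hclosed : IsClosed {p : H × K | ∃ u : Dom, (u : H) = p.1 ∧ X₀ u = p.2})
    (d₀ : ℝ) (hd₀ : 0 < d₀)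
    (hlow : ∀ φ : Dom, (∀ v : Dom, X₀ v = 0 → ⟪(φ : H), (v : H)⟫_ℂ = 0) →
      d₀ * ‖(φ : H)‖ ^ 2 ≤ ‖X₀ φ‖ ^ 2)
    (Y₀ : Dom →ₗ[ℂ] G) (c₁ : ℝ) (hc₁ : 0 < c₁)
    (hY₀ : ∀ ζ : Dom, ‖Y₀ ζ‖ ≤ c₁ * ‖X₀ ζ‖)
    (w : G) :
    (∃! ψ : Dom,
      (∀ v : Dom, X₀ v = 0 → ⟪(ψ : H), (v : H)⟫_ℂ = 0) ∧
      (∀ ζ : Dom, (∀ v : Dom, X₀ v = 0 → ⟪(ζ : H), (v : H)⟫_ℂ = 0) →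
        ⟪X₀ ψ, X₀ ζ⟫_ℂ = -⟪w, Y₀ ζ⟫_ℂ)) ∧
    (∀ ψ : Dom,
      (∀ v : Dom, X₀ v = 0 → ⟪(ψ : H), (v : H)⟫_ℂ = 0) →
      (∀ ζ : Dom, (∀ v : Dom, X₀ v = 0 → ⟪(ζ : H), (v : H)⟫_ℂ = 0) →
        ⟪X₀ ψ, X₀ ζ⟫_ℂ = -⟪w, Y₀ ζ⟫_ℂ) →
      ‖X₀ ψ‖ ≤ c₁ * ‖w‖) := by
  simp only [← mem_orthogonal_map_ker_iff] at hlow ⊢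
  exact stmt_6_general (X₀ := ⟨Dom, X₀⟩) (linearPMap_isClosed_iff.2 hclosed)
    (Submodule.isClosed_orthogonal _) hd₀ hlow Y₀ hc₁.le (fun ζ _ => hY₀ ζ) w
end
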